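/- The generating function of the odd divisor function satisfies ∑_{k≥1} σ°(k)q^k + 1/24 = (1/24)(θ₃⁴(q²) + θ₂⁴(q²)), where σ°(k) is the sum of odd positive divisors of k. -/

import Mathlib

open PowerSeries Classical

/-- `θ₃(q²) = 1 + 2 ∑_{j ≥ 1} q^{j²}`. -/
noncomputable def theta3Q : PowerSeries ℚ :=
  PowerSeries.mk fun k => if k = 0 then 1 else
    if ∃ j : ℕ, 1 ≤ j ∧ j ^ 2 = k then 2 else 0

/-- `θ₂⁴(q²) = 16·q·(∑_{j ≥ 0} q^{j(j+1)})⁴`. -/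
noncomputable def theta2Q4 : PowerSeries ℚ :=
  (16 : ℚ) • (X * (PowerSeries.mk fun k =>
    if ∃ j : ℕ, j * (j + 1) = k then (1 : ℚ) else 0) ^ 4)

/-- Forms `(a,b,c)` with `b² - 4ac = N`, `a > 0 > c`. -/
noncomputable def formsA (N : ℤ) : Finset (ℤ × ℤ × ℤ) :=
  ((Finset.Icc (-N) N) ×ˢ (Finset.Icc (-N) N) ×ˢ (Finset.Icc (-N) N)).filter
    (fun t => 0 < t.1 ∧ t.2.2 < 0 ∧ t.2.1 ^ 2 - 4 * t.1 * t.2.2 = N)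

theorem mem_formsA (N a b c : ℤ) :
    (a, b, c) ∈ formsA N ↔ 0 < a ∧ c < 0 ∧ b ^ 2 - 4 * a * c = N := by
  simp only [formsA, Finset.mem_filter, Finset.mem_product, Finset.mem_Icc]
  constructor
  · rintro ⟨_, h⟩; exact h
  · rintro ⟨h1, h2, h3⟩
    refine ⟨?_, h1, h2, h3⟩
    have h4 : 0 ≤ (a - 1) * (- c - 1) := mul_nonneg (by omega) (by omega)
    have h5 : b ≤ b ^ 2 := by nlinarith [Int.le_self_sq b]
    have h6 : -b ≤ b ^ 2 := by nlinarith [Int.le_self_sq (-b)]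
    refine ⟨⟨?_, ?_⟩, ⟨?_, ?_⟩, ?_, ?_⟩ <;> nlinarith [sq_nonneg b]

theorem forms_odd {N a b c : ℤ} (hN : N % 8 = 5) (h : b ^ 2 - 4 * a * c = N) :
    b % 2 = 1 ∧ a % 2 = 1 ∧ c % 2 = 1 := by
  have hb : b % 2 = 1 := by
    rcases Int.emod_two_eq_zero_or_one b with hb | hb
    · obtain ⟨k, rfl⟩ : ∃ k, b = 2 * k := ⟨b / 2, by omega⟩
      have : 4 * (k ^ 2 - a * c) = N := by rw [← h]; ring
      omega
    · exact hb
  have hac : (a * c) % 2 = 1 := by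
    obtain ⟨k, rfl⟩ : ∃ k, b = 2 * k + 1 := ⟨b / 2, by omega⟩
    have h2 : (k * (k + 1)) % 2 = 0 := Int.even_iff.mp (Int.even_mul_succ_self k)
    have : 4 * (k * (k + 1)) + 1 - 4 * (a * c) = N := by rw [← h]; ring
    omega
  have := Int.odd_mul.mp (Int.odd_iff.mpr hac)
  exact ⟨hb, Int.odd_iff.mp this.1, Int.odd_iff.mp this.2⟩

theorem formsA_sum (N : ℤ) (hN : N % 8 = 5) :
    ∑ t ∈ formsA N, t.1 * (-(t.1 * t.2.2) - t.2.1 ^ 2) = 0 := by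
  set Ap := (formsA N).filter (fun t => 0 < t.1 + t.2.1 + t.2.2) with hAp
  set Am := (formsA N).filter (fun t => ¬ 0 < t.1 + t.2.1 + t.2.2) with hAm
  -- odd part vanishes
  have hodd : ∑ t ∈ formsA N, t.2.1 * t.1 ^ 2 = 0 := by
    have : ∑ t ∈ formsA N, t.2.1 * t.1 ^ 2 = ∑ t ∈ formsA N, -(t.2.1 * t.1 ^ 2) := by
      refine Finset.sum_nbij' (fun t => (t.1, -t.2.1, t.2.2)) (fun t => (t.1, -t.2.1, t.2.2))
        ?_ ?_ ?_ ?_ ?_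
      · rintro ⟨a, b, c⟩ h; simpa [mem_formsA] using h
      · rintro ⟨a, b, c⟩ h; simpa [mem_formsA] using h
      · rintro ⟨a, b, c⟩ h; simp
      · rintro ⟨a, b, c⟩ h; simp
      · rintro ⟨a, b, c⟩ h; simp
    rw [Finset.sum_neg_distrib] at this
    linarith
  have hswap : ∀ g : ℤ × ℤ × ℤ → ℤ,
      ∑ t ∈ Am, g t = ∑ t ∈ Ap, g (-t.2.2, -t.2.1, -t.1) := by
    intro g
    refine Finset.sum_nbij' (fun t => (-t.2.2, -t.2.1, -t.1)) (fun t => (-t.2.2, -t.2.1, -t.1))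
        ?_ ?_ ?_ ?_ ?_
    · rintro ⟨a, b, c⟩ h
      simp only [hAp, hAm, Finset.mem_filter, mem_formsA] at h ⊢
      obtain ⟨⟨h1, h2, h3⟩, h4⟩ := h
      have := forms_odd hN h3
      refine ⟨⟨by omega, by omega, by rw [← h3]; ring⟩, by omega⟩
    · rintro ⟨a, b, c⟩ h
      simp only [hAp, hAm, Finset.mem_filter, mem_formsA] at h ⊢
      obtain ⟨⟨h1, h2, h3⟩, h4⟩ := h
      refine ⟨⟨by omega, by omega, by rw [← h3]; ring⟩, by omega⟩
    · rintro ⟨a, b, c⟩ h; simp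
    · rintro ⟨a, b, c⟩ h; simp
    · rintro ⟨a, b, c⟩ h; simp
  have hK : ∑ t ∈ Ap, (t.2.2 - t.1) * (t.2.1 + t.1) * (t.2.1 + t.2.2) = 0 := by
    have : ∑ t ∈ Ap, (t.2.2 - t.1) * (t.2.1 + t.1) * (t.2.1 + t.2.2)
        = ∑ t ∈ Ap, -((t.2.2 - t.1) * (t.2.1 + t.1) * (t.2.1 + t.2.2)) := by
      have key : ∀ t ∈ Ap, (t.1 + t.2.1 + t.2.2, -t.2.1 - 2 * t.2.2, t.2.2) ∈ Ap := by
        rintro ⟨a, b, c⟩ h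
        simp only [hAp, Finset.mem_filter, mem_formsA] at h ⊢
        obtain ⟨⟨h1, h2, h3⟩, h4⟩ := h
        refine ⟨⟨by omega, by omega, by rw [← h3]; ring⟩, by omega⟩
      refine Finset.sum_nbij' (fun t => (t.1 + t.2.1 + t.2.2, -t.2.1 - 2 * t.2.2, t.2.2))
        (fun t => (t.1 + t.2.1 + t.2.2, -t.2.1 - 2 * t.2.2, t.2.2)) key key ?_ ?_ ?_
      · rintro ⟨a, b, c⟩ h; ext <;> simp only <;> ring
      · rintro ⟨a, b, c⟩ h; ext <;> simp only <;> ring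
      · rintro ⟨a, b, c⟩ h; simp only; ring
    rw [Finset.sum_neg_distrib] at this
    linarith
  have h1 : ∑ t ∈ formsA N, t.1 * (-(t.1 * t.2.2) - t.2.1 ^ 2) =
      ∑ t ∈ formsA N, (t.1 * (-(t.1 * t.2.2) - t.2.1 ^ 2) - t.2.1 * t.1 ^ 2) := by
    rw [Finset.sum_sub_distrib, hodd, sub_zero]
  rw [h1, ← Finset.sum_filter_add_sum_filter_not (formsA N) (fun t => 0 < t.1 + t.2.1 + t.2.2),
    hswap, ← Finset.sum_add_distrib]
  refine Eq.trans ?_ hK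
  apply Finset.sum_congr rfl
  rintro ⟨a, b, c⟩ _
  simp only; ring

theorem formsA_sum_pos (N : ℤ) (hN : N % 8 = 5) :
    ∑ t ∈ (formsA N).filter (fun t => 0 < t.2.1), t.1 * (-(t.1 * t.2.2) - t.2.1 ^ 2) = 0 := by
  have h := formsA_sum N hN
  rw [← Finset.sum_filter_add_sum_filter_not (formsA N) (fun t => 0 < t.2.1)] at h
  have h2 : ∑ t ∈ (formsA N).filter (fun t => ¬ 0 < t.2.1), t.1 * (-(t.1 * t.2.2) - t.2.1 ^ 2)
    = ∑ t ∈ (formsA N).filter (fun t => 0 < t.2.1), t.1 * (-(t.1 * t.2.2) - t.2.1 ^ 2) := by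
    refine Finset.sum_nbij' (fun t => (t.1, -t.2.1, t.2.2)) (fun t => (t.1, -t.2.1, t.2.2))
        ?_ ?_ ?_ ?_ ?_
    · rintro ⟨a, b, c⟩ h
      simp only [Finset.mem_filter, mem_formsA] at h ⊢
      obtain ⟨⟨h1, h2, h3⟩, h4⟩ := h
      have := forms_odd hN h3
      refine ⟨⟨by omega, by omega, by rw [← h3]; ring⟩, by omega⟩
    · rintro ⟨a, b, c⟩ h
      simp only [Finset.mem_filter, mem_formsA] at h ⊢
      obtain ⟨⟨h1, h2, h3⟩, h4⟩ := h
      refine ⟨⟨by omega, by omega, by rw [← h3]; ring⟩, by omega⟩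
    · rintro ⟨a, b, c⟩ h; simp
    · rintro ⟨a, b, c⟩ h; simp
    · rintro ⟨a, b, c⟩ h; simp
  rw [h2] at h
  linarith

/-- `∑ q^{j(j+1)}`. -/
noncomputable def serP : PowerSeries ℚ :=
  PowerSeries.mk fun k => if ∃ j : ℕ, j * (j + 1) = k then (1 : ℚ) else 0

/-- `∑_{n odd} σ(n) q^{n-1}`. -/
noncomputable def serG : PowerSeries ℚ :=
  PowerSeries.mk fun k => if Even k then ((∑ d ∈ (k + 1).divisors, d : ℕ) : ℚ) else 0

theorem conv_even (m : ℕ) (hm : Even m) :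
    ∑ p ∈ (Finset.HasAntidiagonal.antidiagonal m).filter (fun p => ∃ j : ℕ, j * (j + 1) = p.1),
      ∑ d ∈ (p.2 + 1).divisors, (d : ℤ) * ((p.2 : ℤ) - 4 * p.1) = 0 := by
  have hN : (4 * (m : ℤ) + 5) % 8 = 5 := by
    obtain ⟨k, rfl⟩ := hm
    omega
  rw [← formsA_sum_pos _ hN, Finset.sum_sigma']
  symm
  refine Finset.sum_bij (fun t _ => (⟨((t.2.1.toNat / 2) * (t.2.1.toNat / 2 + 1),
    (-(t.1 * t.2.2) - 1).toNat), t.1.toNat⟩ : (_ : ℕ × ℕ) × ℕ)) ?_ ?_ ?_ ?_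
  · rintro ⟨a, b, c⟩ h
    simp only [Finset.mem_filter, mem_formsA] at h
    obtain ⟨⟨h1, h2, h3⟩, h4⟩ := h
    obtain ⟨hb, -, -⟩ := forms_odd hN h3
    obtain ⟨k, rfl⟩ : ∃ k : ℕ, b = 2 * k + 1 := ⟨(b / 2).toNat, by omega⟩
    obtain ⟨a, rfl⟩ : ∃ k : ℕ, a = k := ⟨a.toNat, by omega⟩
    obtain ⟨c, rfl⟩ : ∃ k : ℕ, c = -k := ⟨(-c).toNat, by omega⟩
    have e1 : (2 * (k : ℤ) + 1).toNat / 2 = k := by omega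
    have hac : 0 < a * c := Nat.mul_pos (by omega) (by omega)
    have e2 : (-((a : ℤ) * (-(c : ℤ))) - 1).toNat = a * c - 1 := by
      rw [mul_neg, neg_neg, ← Nat.cast_mul]; omega
    simp only [e1, e2, Finset.mem_sigma, Finset.mem_filter, Finset.HasAntidiagonal.mem_antidiagonal,
      Nat.mem_divisors, Int.toNat_natCast]
    have e3 : (k * (k + 1) + a * c : ℤ) = m + 1 := by nlinarith
    have e4 : k * (k + 1) + a * c = m + 1 := by exact_mod_cast e3
    refine ⟨⟨by omega, k, rfl⟩, ?_, by omega⟩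
    rw [Nat.sub_add_cancel hac]
    exact Dvd.intro _ rfl
  · rintro ⟨a, b, c⟩ h ⟨a', b', c'⟩ h' heq
    simp only [Finset.mem_filter, mem_formsA] at h h'
    obtain ⟨⟨h1, h2, h3⟩, h4⟩ := h
    obtain ⟨⟨h1', h2', h3'⟩, h4'⟩ := h'
    obtain ⟨hb, -, -⟩ := forms_odd hN h3
    obtain ⟨hb', -, -⟩ := forms_odd hN h3'
    simp only [Sigma.mk.injEq, Prod.mk.injEq, heq_eq_eq] at heq
    obtain ⟨⟨q1, q2⟩, q3⟩ := heq
    have ha : a = a' := by omega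
    subst ha
    have hac : 0 < a * (-c) := mul_pos (by omega) (by omega)
    have hac' : 0 < a * (-c') := mul_pos (by omega) (by omega)
    have q4 : a * c = a * c' := by
      rw [mul_neg] at hac hac'
      omega
    have hc : c = c' := mul_left_cancel₀ (by omega) q4
    subst hc
    have hbb : b ^ 2 = b' ^ 2 := by linarith
    have : b = b' := by
      rcases sq_eq_sq_iff_eq_or_eq_neg.mp hbb with h | h <;> omega
    rw [this]
  · rintro ⟨⟨i, j⟩, d⟩ h
    simp only [Finset.mem_sigma, Finset.mem_filter, Finset.HasAntidiagonal.mem_antidiagonal,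
      Nat.mem_divisors] at h
    obtain ⟨⟨h1, k, hk⟩, ⟨e, he⟩, -⟩ := h
    have hd : 0 < d := Nat.pos_of_ne_zero (by rintro rfl; simp at he)
    have he0 : 0 < e := Nat.pos_of_ne_zero (by rintro rfl; simp at he)
    refine ⟨((d : ℤ), 2 * (k : ℤ) + 1, -(e : ℤ)), ?_, ?_⟩
    · simp only [Finset.mem_filter, mem_formsA]
      refine ⟨⟨by omega, by omega, ?_⟩, by omega⟩
      have he' : (j : ℤ) + 1 = d * e := by exact_mod_cast he
      have hk' : (k : ℤ) * (k + 1) = i := by exact_mod_cast hk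
      have h1' : (i : ℤ) + j = m := by exact_mod_cast h1
      nlinarith
    · have e1 : (2 * (k : ℤ) + 1).toNat / 2 = k := by omega
      have e2 : (-((d : ℤ) * (-(e : ℤ))) - 1).toNat = j := by
        rw [mul_neg, neg_neg, ← Nat.cast_mul]; omega
      simp only [e1, e2, Int.toNat_natCast, hk]
  · rintro ⟨a, b, c⟩ h
    simp only [Finset.mem_filter, mem_formsA] at h
    obtain ⟨⟨h1, h2, h3⟩, h4⟩ := h
    obtain ⟨hb, -, -⟩ := forms_odd hN h3
    obtain ⟨k, rfl⟩ : ∃ k : ℕ, b = 2 * k + 1 := ⟨(b / 2).toNat, by omega⟩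
    obtain ⟨a, rfl⟩ : ∃ k : ℕ, a = k := ⟨a.toNat, by omega⟩
    obtain ⟨c, rfl⟩ : ∃ k : ℕ, c = -k := ⟨(-c).toNat, by omega⟩
    have e1 : (2 * (k : ℤ) + 1).toNat / 2 = k := by omega
    have hac : 0 < a * c := Nat.mul_pos (by omega) (by omega)
    have e2 : ((-((a : ℤ) * (-(c : ℤ))) - 1).toNat : ℤ) = a * c - 1 := by
      rw [mul_neg, neg_neg, ← Nat.cast_mul]; omega
    simp only [e1, e2, Int.toNat_natCast]
    push_cast
    ring

theorem conv_all (m : ℕ) :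
    ∑ p ∈ Finset.HasAntidiagonal.antidiagonal m,
      ((p.2 : ℚ) - 4 * p.1) * (coeff p.1 serP * coeff p.2 serG) = 0 := by
  rcases Nat.even_or_odd m with hm | hm
  · have h := conv_even m hm
    have h' : ((∑ p ∈ (Finset.HasAntidiagonal.antidiagonal m).filter (fun p => ∃ j : ℕ, j * (j + 1) = p.1),
      ∑ d ∈ (p.2 + 1).divisors, (d : ℤ) * ((p.2 : ℤ) - 4 * p.1) : ℤ) : ℚ) = 0 := by
      rw [h]; simp
    rw [← h', Finset.sum_filter]
    push_cast
    apply Finset.sum_congr rfl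
    rintro ⟨i, j⟩ hij
    rw [Finset.HasAntidiagonal.mem_antidiagonal] at hij
    simp only [serP, serG, coeff_mk]
    split_ifs with h1 h2 h2
    · push_cast
      rw [← Finset.sum_mul]; ring
    · exfalso
      obtain ⟨k, hk⟩ := h1
      apply h2
      have := Nat.even_mul_succ_self k
      simp only at hij
      rw [hk] at this
      rw [← hij] at hm
      exact (Nat.even_add.mp hm).mp this
    · simp
    · simp
  · apply Finset.sum_eq_zero
    rintro ⟨i, j⟩ hij
    rw [Finset.HasAntidiagonal.mem_antidiagonal] at hij
    simp only [serP, serG, coeff_mk]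
    split_ifs with h1 h2 h2
    · exfalso
      obtain ⟨k, hk⟩ := h1
      have := Nat.even_mul_succ_self k
      simp only at hij
      rw [hk] at this
      rw [← hij] at hm
      exact (Nat.not_even_iff_odd.mpr hm) (this.add h2)
    · simp
    · simp
    · simp

theorem serP_const : constantCoeff serP = 1 := by
  rw [← coeff_zero_eq_constantCoeff_apply, serP, coeff_mk, if_pos ⟨0, rfl⟩]

theorem serG_const : constantCoeff serG = 1 := by
  rw [← coeff_zero_eq_constantCoeff_apply, serG, coeff_mk]
  simp

theorem coeff_X_deriv (f : PowerSeries ℚ) (n : ℕ) :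
    coeff n (X * derivative ℚ f) = n * coeff n f := by
  cases n with
  | zero => simp
  | succ n => rw [coeff_succ_X_mul, coeff_derivative]; push_cast; ring

theorem serP_deriv : serP * derivative ℚ serG = 4 * (derivative ℚ serP * serG) := by
  have h : X * (serP * derivative ℚ serG) = X * (4 * (derivative ℚ serP * serG)) := by
    have h2 : serP * (X * derivative ℚ serG) - (4 : ℚ) • ((X * derivative ℚ serP) * serG) = 0 := by
      ext m
      rw [map_sub, coeff_smul, coeff_mul, coeff_mul, map_zero, ← conv_all m, Finset.smul_sum,
        ← Finset.sum_sub_distrib]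
      apply Finset.sum_congr rfl
      rintro ⟨i, j⟩ _
      simp only [coeff_X_deriv, smul_eq_mul]
      ring
    have h3 : ((4 : ℚ) • ((X * derivative ℚ serP) * serG)) = 4 * ((X * derivative ℚ serP) * serG) := by
      rw [smul_eq_C_mul]; rfl
    rw [h3] at h2
    linear_combination h2
  exact mul_left_cancel₀ X_ne_zero h

theorem serP_pow : serP ^ 4 = serG := by
  have hP : serP * serP⁻¹ = 1 := PowerSeries.mul_inv_cancel _ (by rw [serP_const]; exact one_ne_zero)
  have h : serG * serP⁻¹ ^ 4 = 1 := by
    apply derivative.ext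
    · rw [Derivation.leibniz, derivative_pow, derivative_inv', derivative_one]
      simp only [smul_eq_mul]
      have := serP_deriv
      push_cast
      have e : derivative ℚ serG = 4 * (derivative ℚ serP * serG) * serP⁻¹ := by
        linear_combination serP⁻¹ * this - derivative ℚ serG * hP
      rw [e]
      ring
    · simp [serG_const, serP_const]
  have hP4 : serP ^ 4 * serP⁻¹ ^ 4 = 1 := by rw [← mul_pow, hP, one_pow]
  linear_combination serP ^ 4 * (-h) + serG * hP4

/-- The substitution `q ↦ q²`. -/
noncomputable def sqE : PowerSeries ℚ →ₐ[ℚ] PowerSeries ℚ := PowerSeries.expand 2 two_ne_zero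

theorem coeff_sqE_even (f : PowerSeries ℚ) (n : ℕ) : coeff (2 * n) (sqE f) = coeff n f := by
  rw [sqE, coeff_expand_mul]

theorem coeff_sqE_odd (f : PowerSeries ℚ) (n : ℕ) : coeff (2 * n + 1) (sqE f) = 0 := by
  rw [sqE, coeff_expand_of_not_dvd]; omega

theorem sqE_X : sqE X = X ^ 2 := by rw [sqE, expand_X]

theorem coeff_split_even (f g : PowerSeries ℚ) (n : ℕ) :
    coeff (2 * n) (sqE f + X * sqE g) = coeff n f := by
  rw [map_add, coeff_sqE_even]
  cases n with
  | zero => simp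
  | succ n =>
    rw [show 2 * (n + 1) = (2 * n + 1) + 1 by ring, coeff_succ_X_mul, coeff_sqE_odd, add_zero]

theorem coeff_split_odd (f g : PowerSeries ℚ) (n : ℕ) :
    coeff (2 * n + 1) (sqE f + X * sqE g) = coeff n g := by
  rw [map_add, coeff_sqE_odd, coeff_succ_X_mul, coeff_sqE_even, zero_add]

theorem theta_coeff (M n : ℕ) (h : n ≤ M) :
    coeff n theta3Q = ∑ x ∈ Finset.Icc (-(M : ℤ)) M, if x ^ 2 = (n : ℤ) then (1 : ℚ) else 0 := by
  rw [theta3Q, coeff_mk]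
  split_ifs with h0 h1
  · subst h0
    simp
  · obtain ⟨j, hj, rfl⟩ := h1
    have hjM : j ≤ M := by nlinarith
    rw [← Finset.sum_filter]
    have : (Finset.Icc (-(M : ℤ)) M).filter (fun x => x ^ 2 = ((j ^ 2 : ℕ) : ℤ)) = {(j : ℤ), -(j : ℤ)} := by
      ext x
      simp only [Finset.mem_filter, Finset.mem_Icc, Finset.mem_insert, Finset.mem_singleton]
      push_cast
      rw [sq_eq_sq_iff_eq_or_eq_neg]
      constructor
      · exact fun h => h.2
      · intro h; exact ⟨by omega, h⟩
    rw [this, Finset.sum_pair (by omega)]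
    norm_num
  · symm
    apply Finset.sum_eq_zero
    intro x _
    rw [if_neg]
    intro hx
    apply h1
    refine ⟨x.natAbs, ?_, ?_⟩
    · rw [Nat.one_le_iff_ne_zero]
      intro h2
      have : x = 0 := by omega
      subst this
      apply h0
      simpa using hx.symm
    · zify
      rw [sq_abs, hx]

theorem theta_sq_coeff (M n : ℕ) (h : n ≤ M) :
    coeff n (theta3Q ^ 2) = ((((Finset.Icc (-(M : ℤ)) M) ×ˢ (Finset.Icc (-(M : ℤ)) M)).filter
      (fun t => t.1 ^ 2 + t.2 ^ 2 = (n : ℤ))).card : ℚ) := by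
  rw [sq, coeff_mul]
  have h1 : ∀ p ∈ Finset.HasAntidiagonal.antidiagonal n,
      coeff p.1 theta3Q * coeff p.2 theta3Q =
      ∑ t ∈ (Finset.Icc (-(M : ℤ)) M) ×ˢ (Finset.Icc (-(M : ℤ)) M),
        if t.1 ^ 2 = (p.1 : ℤ) ∧ t.2 ^ 2 = (p.2 : ℤ) then (1 : ℚ) else 0 := by
    rintro ⟨i, j⟩ hp
    rw [Finset.HasAntidiagonal.mem_antidiagonal] at hp
    simp only at hp ⊢
    rw [theta_coeff M i (by omega), theta_coeff M j (by omega), Finset.sum_mul_sum,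
      Finset.sum_product]
    apply Finset.sum_congr rfl
    intro x _
    apply Finset.sum_congr rfl
    intro y _
    simp only [ite_and]
    split_ifs <;> simp
  rw [Finset.sum_congr rfl h1, Finset.sum_comm, Finset.card_filter]
  push_cast
  apply Finset.sum_congr rfl
  rintro ⟨x, y⟩ _
  simp only
  split_ifs with h2
  · rw [Finset.sum_eq_single (x.natAbs ^ 2, y.natAbs ^ 2)]
    · simp
    · rintro ⟨i, j⟩ _ hne
      rw [if_neg]
      rintro ⟨hx, hy⟩
      apply hne
      simp only [Prod.mk.injEq]
      zify
      simp [sq_abs, hx, hy]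
    · intro hne
      exfalso
      apply hne
      rw [Finset.HasAntidiagonal.mem_antidiagonal]
      zify
      simpa using h2
  · apply Finset.sum_eq_zero
    rintro ⟨i, j⟩ hp
    rw [Finset.HasAntidiagonal.mem_antidiagonal] at hp
    rw [if_neg]
    rintro ⟨hx, hy⟩
    apply h2
    simp only at hx hy hp
    rw [hx, hy]
    exact_mod_cast hp

theorem theta_sq_double (n : ℕ) : coeff (2 * n) (theta3Q ^ 2) = coeff n (theta3Q ^ 2) := by
  rw [theta_sq_coeff (2 * n) _ le_rfl, theta_sq_coeff (2 * n) n (by omega)]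
  congr 1
  have bd : ∀ x y : ℤ, x ^ 2 + y ^ 2 ≤ 2 * n →
      (-(2 * n : ℤ) ≤ x ∧ x ≤ 2 * n) ∧ (-(2 * n : ℤ) ≤ y ∧ y ≤ 2 * n) := by
    intro x y h
    have h1 := Int.le_self_sq x
    have h2 := Int.le_self_sq (-x)
    have h3 := Int.le_self_sq y
    have h4 := Int.le_self_sq (-y)
    have h5 := sq_nonneg x
    have h6 := sq_nonneg y
    rw [neg_sq] at h2 h4
    refine ⟨⟨?_, ?_⟩, ?_, ?_⟩ <;> linarith
  have par : ∀ x y : ℤ, x ^ 2 + y ^ 2 = 2 * n → (x + y) % 2 = 0 := by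
    intro x y h
    have : Even ((x + y) ^ 2) := ⟨n + x * y, by linarith⟩
    exact Int.even_iff.mp ((Int.even_pow.mp this).1)
  refine Finset.card_nbij' (fun t => ((t.1 + t.2) / 2, (t.1 - t.2) / 2))
    (fun t => (t.1 + t.2, t.1 - t.2)) ?_ ?_ ?_ ?_
  · rintro ⟨x, y⟩ h
    simp only [Finset.coe_filter, Set.mem_setOf_eq, Finset.mem_product, Finset.mem_Icc] at h ⊢
    push_cast at h ⊢
    obtain ⟨-, h⟩ := h
    have hp := par x y h
    obtain ⟨u, hu⟩ : ∃ u, x + y = 2 * u := ⟨(x + y) / 2, by omega⟩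
    obtain ⟨v, hv⟩ : ∃ v, x - y = 2 * v := ⟨(x - y) / 2, by omega⟩
    obtain rfl : x = u + v := by omega
    obtain rfl : y = u - v := by omega
    have e1 : (u + v + (u - v)) / 2 = u := by omega
    have e2 : (u + v - (u - v)) / 2 = v := by omega
    rw [e1, e2]
    have : u ^ 2 + v ^ 2 = n := by linarith
    exact ⟨bd u v (by omega), this⟩
  · rintro ⟨x, y⟩ h
    simp only [Finset.coe_filter, Set.mem_setOf_eq, Finset.mem_product, Finset.mem_Icc] at h ⊢
    push_cast at h ⊢
    obtain ⟨-, h⟩ := h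
    have : (x + y) ^ 2 + (x - y) ^ 2 = 2 * n := by linarith
    exact ⟨bd _ _ this.le, this⟩
  · rintro ⟨x, y⟩ h
    simp only [Finset.coe_filter, Set.mem_setOf_eq, Finset.mem_product, Finset.mem_Icc] at h ⊢
    push_cast at h
    have hp := par x y h.2
    ext <;> simp only <;> omega
  · rintro ⟨x, y⟩ h
    ext <;> simp only <;> omega

theorem theta_split : theta3Q = sqE (sqE theta3Q) + 2 * X * sqE (sqE serP) := by
  have e : sqE (sqE theta3Q) + 2 * X * sqE (sqE serP)
      = sqE (sqE theta3Q) + X * sqE (sqE (2 * serP)) := by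
    rw [map_mul, map_mul, map_ofNat, map_ofNat]; ring
  rw [e]
  have two : ∀ k, coeff k (2 * serP) = 2 * coeff k serP := by
    intro k
    rw [two_mul, map_add]; ring
  ext n
  rcases Nat.even_or_odd' n with ⟨m, rfl | rfl⟩
  · rw [coeff_split_even]
    rcases Nat.even_or_odd' m with ⟨k, rfl | rfl⟩
    · rw [coeff_sqE_even]
      simp only [theta3Q, coeff_mk]
      have : (∃ j : ℕ, 1 ≤ j ∧ j ^ 2 = 2 * (2 * k)) ↔ (∃ j : ℕ, 1 ≤ j ∧ j ^ 2 = k) := by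
        constructor
        · rintro ⟨j, h1, h2⟩
          have : Even (j ^ 2) := ⟨2 * k, by omega⟩
          obtain ⟨i, rfl⟩ := (Nat.even_pow.mp this).1
          exact ⟨i, by omega, by nlinarith⟩
        · rintro ⟨j, h1, h2⟩
          exact ⟨2 * j, by omega, by rw [← h2]; ring⟩
      simp [this]
    · rw [coeff_sqE_odd, theta3Q, coeff_mk, if_neg (by omega), if_neg]
      rintro ⟨j, h1, h2⟩
      have : Even (j ^ 2) := ⟨2 * k + 1, by omega⟩
      obtain ⟨i, rfl⟩ := (Nat.even_pow.mp this).1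
      have : 4 * i ^ 2 = 2 * (2 * k + 1) := by rw [← h2]; ring
      omega
  · rw [coeff_split_odd]
    have odd_sq : ∀ j, j ^ 2 = 2 * m + 1 → ∃ i, j = 2 * i + 1 ∧ 2 * (i * (i + 1)) = m := by
      intro j hj
      have : Odd (j ^ 2) := ⟨m, hj⟩
      obtain ⟨i, rfl⟩ := Nat.Odd.of_mul_right (by rw [sq] at this; exact this)
      exact ⟨i, rfl, by nlinarith⟩
    rcases Nat.even_or_odd' m with ⟨k, rfl | rfl⟩
    · rw [coeff_sqE_even, two]
      simp only [theta3Q, serP, coeff_mk]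
      have : (∃ j : ℕ, 1 ≤ j ∧ j ^ 2 = 2 * (2 * k) + 1) ↔ (∃ j : ℕ, j * (j + 1) = k) := by
        constructor
        · rintro ⟨j, h1, h2⟩
          obtain ⟨i, -, hi⟩ := odd_sq j h2
          exact ⟨i, by omega⟩
        · rintro ⟨j, rfl⟩
          exact ⟨2 * j + 1, by omega, by ring⟩
      simp [this]
    · rw [coeff_sqE_odd, theta3Q, coeff_mk, if_neg (by omega), if_neg]
      rintro ⟨j, h1, h2⟩
      obtain ⟨i, -, hi⟩ := odd_sq j h2
      omega

theorem theta_sq_split :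
    theta3Q ^ 2 = sqE (sqE theta3Q ^ 2 + 4 * X * sqE serP ^ 2)
      + X * sqE (4 * sqE theta3Q * sqE serP) := by
  conv_lhs => rw [theta_split]
  simp only [map_add, map_mul, map_pow, map_ofNat, sqE_X]
  ring

theorem theta_E1 : theta3Q ^ 2 = sqE theta3Q ^ 2 + 4 * X * sqE serP ^ 2 := by
  ext n
  rw [← theta_sq_double n, theta_sq_split, coeff_split_even]

theorem theta_E2 : serP ^ 2 = sqE theta3Q * sqE serP := by
  have h : 4 * serP ^ 2 = 4 * sqE theta3Q * sqE serP := by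
    ext n
    have h1 : theta3Q ^ 2 = sqE (theta3Q ^ 2) + X * sqE (4 * serP ^ 2) := by
      rw [theta_E1]
      conv_rhs => rw [← theta_E1]
      simp only [map_mul, map_pow, map_ofNat]
      ring
    have h2 := congrArg (coeff (2 * n + 1)) h1
    have h3 := congrArg (coeff (2 * n + 1)) theta_sq_split
    rw [coeff_split_odd] at h2 h3
    rw [← h2, ← h3]
  have h4 : (4 : PowerSeries ℚ) ≠ 0 := by
    have : (4 : PowerSeries ℚ) = C (4 : ℚ) := rfl
    rw [this, Ne, ← map_zero (C (R := ℚ)), C_injective.eq_iff]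
    norm_num
  exact mul_left_cancel₀ h4 (by rw [h, mul_assoc])

/-- `θ₃⁴ + θ₂⁴`. -/
noncomputable def serH : PowerSeries ℚ := theta3Q ^ 4 + 16 * X * serP ^ 4

theorem serH_rec : serH = sqE serH + X * (24 * serG) := by
  rw [← serP_pow]
  simp only [serH, map_add, map_mul, map_pow, map_ofNat, sqE_X]
  have h1 := theta_E1
  have h2 := theta_E2
  have h3 : theta3Q ^ 4 = (sqE theta3Q ^ 2 + 4 * X * sqE serP ^ 2) ^ 2 := by rw [← h1]; ring
  have h4 : serP ^ 4 = (sqE theta3Q * sqE serP) ^ 2 := by rw [← h2]; ring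
  rw [h3, h4]
  ring

theorem coeff24 (k : ℕ) (f : PowerSeries ℚ) : coeff k (24 * f) = 24 * coeff k f := by
  have : (24 : PowerSeries ℚ) = C (24 : ℚ) := rfl
  rw [this, coeff_C_mul]

theorem serH_coeff (n : ℕ) : coeff n serH = 24 * (if n = 0 then (1 / 24 : ℚ)
        else ((∑ d ∈ n.divisors.filter (fun d => Odd d), d : ℕ) : ℚ)) := by
  induction n using Nat.strong_induction_on with
  | _ n ih =>
    rcases Nat.even_or_odd' n with ⟨m, rfl | rfl⟩
    · rcases Nat.eq_zero_or_pos m with rfl | hm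
      · simp [serH, theta3Q]
      · rw [serH_rec, map_add, coeff_sqE_even, ih m (by omega)]
        obtain ⟨k, rfl⟩ : ∃ k, m = k + 1 := ⟨m - 1, by omega⟩
        have h0 : coeff (2 * (k + 1)) (X * (24 * serG)) = 0 := by
          rw [show 2 * (k + 1) = (2 * k + 1) + 1 by ring, coeff_succ_X_mul, coeff24, serG,
            coeff_mk, if_neg (by simp), mul_zero]
        rw [h0, add_zero, if_neg (by omega), if_neg (by omega)]
        have : (2 * (k + 1)).divisors.filter (fun d => Odd d)
            = (k + 1).divisors.filter (fun d => Odd d) := by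
          ext d
          simp only [Finset.mem_filter, Nat.mem_divisors]
          constructor
          · rintro ⟨⟨h1, h2⟩, h3⟩
            exact ⟨⟨(Nat.Coprime.dvd_of_dvd_mul_left (Nat.coprime_two_right.mpr h3) h1),
              by omega⟩, h3⟩
          · rintro ⟨⟨h1, h2⟩, h3⟩
            exact ⟨⟨Dvd.dvd.mul_left h1 2, by omega⟩, h3⟩
        rw [this]
    · rw [serH_rec, map_add, coeff_sqE_odd, coeff_succ_X_mul, coeff24, serG, coeff_mk,
        if_pos (by simp), if_neg (by omega), zero_add]
      have : (2 * m + 1).divisors.filter (fun d => Odd d) = (2 * m + 1).divisors := by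
        apply Finset.filter_true_of_mem
        intro d hd
        exact Odd.of_dvd_nat ⟨m, rfl⟩ (Nat.dvd_of_mem_divisors hd)
      rw [this]

/-- The generating function of the odd divisor function:
`1/24 + ∑_{k ≥ 1} σ°(k) q^k = (1/24)(θ₃⁴(q²) + θ₂⁴(q²))`. -/
theorem odd_divisor_generating_function :
    (PowerSeries.mk fun k => if k = 0 then (1 / 24 : ℚ)
        else ((∑ d ∈ k.divisors.filter (fun d => Odd d), d : ℕ) : ℚ)) =
      (1 / 24 : ℚ) • (theta3Q ^ 4 + theta2Q4) := by
  have h : theta3Q ^ 4 + theta2Q4 = serH := by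
    rw [serH, theta2Q4, smul_eq_C_mul, mul_assoc]; rfl
  rw [h]
  ext n
  rw [coeff_smul, serH_coeff, coeff_mk, smul_eq_mul, ← mul_assoc]
  norm_num
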